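/- Assume (A1)–(A4) as in the nonlinear stability theorem, and let (ρ, η, μ_ρ, μ_η) and (ρ̂, η̂, μ̂_ρ, μ̂_η) be two smooth functions of (t,x) ∈ [0,T] × ℝ^d, ℤ^d-periodic in x, each solving pointwise the coupled Cahn–Hilliard/Allen–Cahn system ∂_t ρ = div(L₁₁ ∇μ_ρ + L₁₂ μ_η), μ_ρ = −γ_ρ Δρ + ∂_ρ f(ρ,η), ∂_t η = −(L₂₁·∇μ_ρ + L₂₂ μ_η), μ_η = −γ_η Δη + ∂_η f(ρ,η), with mobility evaluated at the respective solution. If ρ(0,·) = ρ̂(0,·) and η(0,·) = η̂(0,·), then (ρ, η) = (ρ̂, η̂) and (μ_ρ, μ_η) = (μ̂_ρ, μ̂_η) on all of [0,T] × ℝ^d. -/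

import Mathlib

noncomputable section
open MeasureTheory

/-- The periodicity cell `Ω = [0,1]^d`. -/
def cell (d : ℕ) : Set (Fin d → ℝ) := Set.Icc 0 1

/-- `ℤ^d`-periodicity of a function on `ℝ^d`. -/
def ZPeriodic {d : ℕ} (f : (Fin d → ℝ) → ℝ) : Prop :=
  ∀ (x : Fin d → ℝ) (k : Fin d → ℤ), f (x + fun i => (k i : ℝ)) = f x

/-- The gradient of a scalar field on `ℝ^d`. -/
def grad {d : ℕ} (f : (Fin d → ℝ) → ℝ) (x : Fin d → ℝ) : Fin d → ℝ :=
  fun i => fderiv ℝ f x (Pi.single i 1)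

/-- The divergence of a vector field on `ℝ^d`. -/
def divg {d : ℕ} (F : (Fin d → ℝ) → Fin d → ℝ) (x : Fin d → ℝ) : ℝ :=
  ∑ i, fderiv ℝ (fun y => F y i) x (Pi.single i 1)

/-- The Laplacian of a scalar field on `ℝ^d`. -/
def lap {d : ℕ} (f : (Fin d → ℝ) → ℝ) (x : Fin d → ℝ) : ℝ :=
  ∑ i, fderiv ℝ (fun y => fderiv ℝ f y (Pi.single i 1)) x (Pi.single i 1)

/-- Squared `L²(Ω)` norm. -/
def l2sq {d : ℕ} (f : (Fin d → ℝ) → ℝ) : ℝ := ∫ x in cell d, (f x) ^ 2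

/-- Squared `L²(Ω)` norm of a vector field. -/
def l2sqVec {d : ℕ} (F : (Fin d → ℝ) → Fin d → ℝ) : ℝ :=
  ∫ x in cell d, ∑ i, (F x i) ^ 2

/-- Squared `H¹(Ω)` norm, `‖f‖₁² = ‖f‖₀² + ‖∇f‖₀²`. -/
def h1sq {d : ℕ} (f : (Fin d → ℝ) → ℝ) : ℝ := l2sq f + l2sqVec (grad f)

/-- Negative-order norm `‖r‖₋₁ = sup { ∫_Ω r v dx / ‖v‖₁ }`, the supremum
being over nonzero smooth `ℤ^d`-periodic test functions. -/
def hneg1 {d : ℕ} (r : (Fin d → ℝ) → ℝ) : ℝ :=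
  sSup { c | ∃ v : (Fin d → ℝ) → ℝ, ContDiff ℝ (⊤ : ℕ∞) v ∧ ZPeriodic v ∧ v ≠ 0 ∧
    c = (∫ x in cell d, r x * v x) / Real.sqrt (h1sq v) }

/-- The argument tuple `(ρ, ∇ρ, η, ∇η) ∈ ℝ^{2d+2}` of the mobility. -/
abbrev Args (d : ℕ) := ℝ × (Fin d → ℝ) × ℝ × (Fin d → ℝ)

/-- Mobility arguments `(ρ(x), ∇ρ(x), η(x), ∇η(x))`. -/
def mobArgs {d : ℕ} (ρ η : (Fin d → ℝ) → ℝ) (x : Fin d → ℝ) : Args d :=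
  (ρ x, grad ρ x, η x, grad η x)

/-- The vector `(g, s) ∈ ℝ^{d+1}`. -/
def dvec {d : ℕ} (g : Fin d → ℝ) (s : ℝ) : (Fin d ⊕ Unit) → ℝ :=
  Sum.elim g fun _ => s

/-- Quadratic form `ξᵀ M ξ` on `ℝ^{d+1}`. -/
def qform {d : ℕ} (M : Matrix (Fin d ⊕ Unit) (Fin d ⊕ Unit) ℝ)
    (ξ : (Fin d ⊕ Unit) → ℝ) : ℝ :=
  ∑ i, ∑ j, ξ i * M i j * ξ j

/-- The dissipation functional
`D_{ρ,η}(u,w) = ∫_Ω (∇u, w)ᵀ L(ρ,∇ρ,η,∇η) (∇u, w) dx`. -/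
def diss (d : ℕ) (L : Args d → Matrix (Fin d ⊕ Unit) (Fin d ⊕ Unit) ℝ)
    (ρ η u w : (Fin d → ℝ) → ℝ) : ℝ :=
  ∫ x in cell d, qform (L (mobArgs ρ η x)) (dvec (grad u x) (w x))

/-- Partial derivative `∂_ρ` of a two-variable function. -/
def pdRho (f : ℝ → ℝ → ℝ) : ℝ → ℝ → ℝ := fun ρ η => deriv (fun r => f r η) ρ

/-- Partial derivative `∂_η` of a two-variable function. -/
def pdEta (f : ℝ → ℝ → ℝ) : ℝ → ℝ → ℝ := fun ρ η => deriv (fun e => f ρ e) η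

/-- Iterated partial derivative `∂_ρ^k ∂_η^l f`. -/
def pdiff (k l : ℕ) (f : ℝ → ℝ → ℝ) : ℝ → ℝ → ℝ := pdRho^[k] (pdEta^[l] f)

/-- The relative energy functional `E_α(ρ,η|ρ̂,η̂)`. -/
def relE (d : ℕ) (γρ γη α : ℝ) (f : ℝ → ℝ → ℝ)
    (ρ η ρh ηh : (Fin d → ℝ) → ℝ) : ℝ :=
  ∫ x in cell d,
    γρ / 2 * ∑ i, (grad (fun y => ρ y - ρh y) x i) ^ 2
    + γη / 2 * ∑ i, (grad (fun y => η y - ηh y) x i) ^ 2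
    + α / 2 * (ρ x - ρh x) ^ 2 + α / 2 * (η x - ηh x) ^ 2
    + f (ρ x) (η x) - f (ρh x) (ηh x)
    - pdRho f (ρh x) (ηh x) * (ρ x - ρh x)
    - pdEta f (ρh x) (ηh x) * (η x - ηh x)

/-- Smoothness in space-time together with `ℤ^d`-periodicity in space. -/
def SmoothPer (d : ℕ) (u : ℝ → (Fin d → ℝ) → ℝ) : Prop :=
  ContDiff ℝ (⊤ : ℕ∞) (fun p : ℝ × (Fin d → ℝ) => u p.1 p.2) ∧ ∀ t, ZPeriodic (u t)

/-- `(ρ,η,μ_ρ,μ_η)` solves the coupled Cahn–Hilliard/Allen–Cahn system with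
mobility `L` (evaluated at `(ρ,∇ρ,η,∇η)`), pointwise on `[0,T] × ℝ^d`. -/
def Solves (d : ℕ) (T γρ γη : ℝ) (f : ℝ → ℝ → ℝ)
    (L : Args d → Matrix (Fin d ⊕ Unit) (Fin d ⊕ Unit) ℝ)
    (ρ η μρ μη : ℝ → (Fin d → ℝ) → ℝ) : Prop :=
  ∀ t ∈ Set.Icc (0:ℝ) T, ∀ x,
    (deriv (fun s => ρ s x) t =
      divg (fun y i =>
        (∑ j, L (mobArgs (ρ t) (η t) y) (Sum.inl i) (Sum.inl j)
            * grad (μρ t) y j)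
        + L (mobArgs (ρ t) (η t) y) (Sum.inl i) (Sum.inr ()) * μη t y) x) ∧
    (μρ t x = -γρ * lap (ρ t) x + pdRho f (ρ t x) (η t x)) ∧
    (deriv (fun s => η s x) t =
      -((∑ i, L (mobArgs (ρ t) (η t) x) (Sum.inr ()) (Sum.inl i)
            * grad (μρ t) x i)
        + L (mobArgs (ρ t) (η t) x) (Sum.inr ()) (Sum.inr ()) * μη t x)) ∧
    (μη t x = -γη * lap (η t) x + pdEta f (ρ t x) (η t x))

/-- Residual `r₁ = ∂_t ρ̂ − div(L₁₁ ∇μ̂_ρ + L₁₂ μ̂_η)` with mobility evaluated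
at `(ρ,∇ρ,η,∇η)`. -/
def res1 {d : ℕ} (L : Args d → Matrix (Fin d ⊕ Unit) (Fin d ⊕ Unit) ℝ)
    (ρ η ρh μρh μηh : ℝ → (Fin d → ℝ) → ℝ) (t : ℝ) (x : Fin d → ℝ) : ℝ :=
  deriv (fun s => ρh s x) t -
    divg (fun y i =>
      (∑ j, L (mobArgs (ρ t) (η t) y) (Sum.inl i) (Sum.inl j)
          * grad (μρh t) y j)
      + L (mobArgs (ρ t) (η t) y) (Sum.inl i) (Sum.inr ()) * μηh t y) x

/-- Residual `r₂ = μ̂_ρ + γ_ρ Δρ̂ − ∂_ρ f(ρ̂,η̂)`. -/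
def res2 {d : ℕ} (γρ : ℝ) (f : ℝ → ℝ → ℝ)
    (ρh ηh μρh : ℝ → (Fin d → ℝ) → ℝ) (t : ℝ) (x : Fin d → ℝ) : ℝ :=
  μρh t x + γρ * lap (ρh t) x - pdRho f (ρh t x) (ηh t x)

/-- Residual `r₃ = ∂_t η̂ + L₂₁·∇μ̂_ρ + L₂₂ μ̂_η` with mobility evaluated at
`(ρ,∇ρ,η,∇η)`. -/
def res3 {d : ℕ} (L : Args d → Matrix (Fin d ⊕ Unit) (Fin d ⊕ Unit) ℝ)
    (ρ η ηh μρh μηh : ℝ → (Fin d → ℝ) → ℝ) (t : ℝ) (x : Fin d → ℝ) : ℝ :=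
  deriv (fun s => ηh s x) t
    + (∑ i, L (mobArgs (ρ t) (η t) x) (Sum.inr ()) (Sum.inl i)
        * grad (μρh t) x i)
    + L (mobArgs (ρ t) (η t) x) (Sum.inr ()) (Sum.inr ()) * μηh t x

/-- Residual `r₄ = μ̂_η + γ_η Δη̂ − ∂_η f(ρ̂,η̂)`. -/
def res4 {d : ℕ} (γη : ℝ) (f : ℝ → ℝ → ℝ)
    (ρh ηh μηh : ℝ → (Fin d → ℝ) → ℝ) (t : ℝ) (x : Fin d → ℝ) : ℝ :=
  μηh t x + γη * lap (ηh t) x - pdEta f (ρh t x) (ηh t x)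

/-!
Let `U = ρ - ρ̂`, `V = η - η̂`, write `q = (ρ,∇ρ,η,∇η)`, `ζ = (∇μ_ρ, μ_η)`, and let
`E(t) = γ_ρ/2 ‖∇U‖₀² + 1/2 ‖U‖₀² + γ_η/2 ‖∇V‖₀² + 1/2 ‖V‖₀²`. Testing the equations for `U` and `V`
with `U - γ_ρ ΔU` and `V - γ_η ΔV` gives
`E' = ∫_Ω ((Ψ(q) - Ψ(q̂)) - (ζ - ζ̂)) · (L(q) ζ - L(q̂) ζ̂)`,
where `Ψ(q) = (∇(∂_ρ f - ρ), ∂_η f - η)` contains no derivative of higher order than `q` itself.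
Since `L(q) ζ - L(q̂) ζ̂ = L(q) (ζ - ζ̂) + (L(q) - L(q̂)) ζ̂`, coercivity of `L(q)` produces
`-λ₀ |ζ - ζ̂|²`, which absorbs all other occurrences of `ζ - ζ̂` by Young's inequality. On the
compact range of the two solutions `Ψ` and `L` are Lipschitz, so what is left is bounded by
`C ‖q - q̂‖₀² ≤ C' E`, and Grönwall's inequality gives `E = 0`.
-/

open Function Set

section SpaceTime

variable {E F G : Type*} [NormedAddCommGroup E] [NormedSpace ℝ E] [NormedAddCommGroup F]
  [NormedSpace ℝ F] [NormedAddCommGroup G] [NormedSpace ℝ G] {m n : WithTop ℕ∞}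

theorem contDiff_of_uncurry {u : E → F → G} (hu : ContDiff ℝ n (uncurry u)) (x : E) :
    ContDiff ℝ n (u x) :=
  hu.comp (contDiff_prodMk_right x)

theorem contDiff_uncurry_fderiv_right {u : E → F → G} (hu : ContDiff ℝ n (uncurry u))
    (hmn : m + 1 ≤ n) : ContDiff ℝ m (uncurry fun x y => fderiv ℝ (u x) y) :=
  ContDiff.fderiv (f := fun p : E × F => u p.1)
    (hu.comp ((contDiff_fst.comp contDiff_fst).prodMk contDiff_snd)) contDiff_snd hmn

theorem contDiff_uncurry_deriv_right {u : E → ℝ → G} (hu : ContDiff ℝ n (uncurry u))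
    (hmn : m + 1 ≤ n) : ContDiff ℝ m (uncurry fun x => deriv (u x)) :=
  (contDiff_uncurry_fderiv_right hu hmn).clm_apply contDiff_const

theorem contDiff_uncurry_deriv_left {u : ℝ → E → G} (hu : ContDiff ℝ n (uncurry u))
    (hmn : m + 1 ≤ n) : ContDiff ℝ m (uncurry fun t x => deriv (fun s => u s x) t) :=
  (contDiff_uncurry_deriv_right (u := fun x t => u t x)
    (hu.comp (contDiff_snd.prodMk contDiff_fst)) hmn).comp (contDiff_snd.prodMk contDiff_fst)

theorem hasDerivAt_of_contDiff_uncurry {u : ℝ → E → G} (hu : ContDiff ℝ 1 (uncurry u))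
    (t : ℝ) (x : E) : HasDerivAt (fun s => u s x) (fderiv ℝ (uncurry u) (t, x) (1, 0)) t :=
  HasFDerivAt.comp_hasDerivAt (l := uncurry u) (f := fun s => (s, x)) t
    (hu.differentiable one_ne_zero (t, x)).hasFDerivAt
    ((hasDerivAt_id t).prodMk (hasDerivAt_const t x))

theorem fderiv_apply_of_contDiff_uncurry {u : ℝ → E → G} (hu : ContDiff ℝ 1 (uncurry u))
    (t : ℝ) (x v : E) : fderiv ℝ (u t) x v = fderiv ℝ (uncurry u) (t, x) (0, v) := by
  have h : HasFDerivAt (u t) ((fderiv ℝ (uncurry u) (t, x)).comp (.inr ℝ ℝ E)) x :=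
    (hu.differentiable one_ne_zero (t, x)).hasFDerivAt.comp x (hasFDerivAt_prodMk_right t x)
  rw [h.fderiv, ContinuousLinearMap.comp_apply, ContinuousLinearMap.inr_apply]

theorem fderiv_deriv_comm {u : ℝ → E → G} (hu : ContDiff ℝ 2 (uncurry u)) (t : ℝ) (x v : E) :
    fderiv ℝ (fun y => deriv (fun s => u s y) t) x v = deriv (fun s => fderiv ℝ (u s) x v) t := by
  have hu₁ : ContDiff ℝ 1 (uncurry u) := hu.of_le one_le_two
  have hD : ContDiff ℝ 1 (fderiv ℝ (uncurry u)) := hu.fderiv_right one_add_one_eq_two.le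
  have hsnd (a b p : ℝ × E) : fderiv ℝ (fun q => fderiv ℝ (uncurry u) q a) p b =
      fderiv ℝ (fderiv ℝ (uncurry u)) p b a := by
    simp [fderiv_clm_apply (hD.differentiable one_ne_zero p) (differentiableAt_const a)]
  have htime : ContDiff ℝ 1 (uncurry fun s y => fderiv ℝ (uncurry u) (s, y) (1, 0)) :=
    hD.clm_apply contDiff_const
  have hspace : ContDiff ℝ 1 (uncurry fun s y => fderiv ℝ (uncurry u) (s, y) (0, v)) :=
    hD.clm_apply contDiff_const
  simp_rw [(hasDerivAt_of_contDiff_uncurry hu₁ _ _).deriv, fderiv_apply_of_contDiff_uncurry hu₁]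
  rw [fderiv_apply_of_contDiff_uncurry htime t x v,
    (hasDerivAt_of_contDiff_uncurry hspace t x).deriv]
  exact (hsnd _ _ _).trans (((hu.contDiffAt.isSymmSndFDerivAt (by simp)) _ _).trans
    (hsnd _ _ _).symm)

theorem hasDerivAt_setIntegral_of_contDiff [MeasurableSpace E] [OpensMeasurableSpace E]
    {μ : Measure E} [IsFiniteMeasureOnCompacts μ] {K : Set E} (hK : IsCompact K)
    {u : ℝ → E → G} (hu : ContDiff ℝ 1 (uncurry u)) (t : ℝ) :
    HasDerivAt (fun s => ∫ x in K, u s x ∂μ) (∫ x in K, deriv (fun s => u s x) t ∂μ) t := by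
  have hderiv : Continuous (uncurry fun s x => deriv (fun r => u r x) s) :=
    (contDiff_uncurry_deriv_left hu (zero_add 1).le).continuous
  have hint {w : ℝ → E → G} (hw : Continuous (uncurry w)) (s : ℝ) : IntegrableOn (w s) K μ :=
    (hw.comp (Continuous.prodMk_right s)).continuousOn.integrableOn_compact hK
  obtain ⟨C, hC⟩ :=
    ((isCompact_closedBall t 1).prod hK).exists_bound_of_continuousOn hderiv.continuousOn
  exact (hasDerivAt_integral_of_dominated_loc_of_deriv_le (Metric.closedBall_mem_nhds t one_pos)
    (.of_forall fun s => (hint hu.continuous s).aestronglyMeasurable) (hint hu.continuous t)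
    (hint hderiv t).aestronglyMeasurable
    ((ae_restrict_iff' hK.measurableSet).2 (.of_forall fun x hx s hs => hC (s, x) ⟨hs, hx⟩))
    (integrableOn_const hK.measure_lt_top.ne)
    (.of_forall fun x s _ =>
      (hasDerivAt_of_contDiff_uncurry hu s x).differentiableAt.hasDerivAt)).2

end SpaceTime

theorem eq_zero_of_deriv_le_mul_of_nonneg {E E' : ℝ → ℝ} {C a b : ℝ}
    (hE : ∀ t ∈ Icc a b, HasDerivAt E (E' t) t) (hnonneg : ∀ t ∈ Icc a b, 0 ≤ E t)
    (ha : E a = 0) (hle : ∀ t ∈ Icc a b, E' t ≤ C * E t) : ∀ t ∈ Icc a b, E t = 0 := by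
  intro t ht
  have hbound := le_gronwallBound_of_liminf_deriv_right_le (f := E) (f' := E') (δ := 0) (ε := 0)
    (fun s hs => (hE s hs).continuousAt.continuousWithinAt)
    (fun s hs r hr => by
      simpa only [slope_def_field, div_eq_inv_mul] using
        (hE s (Ico_subset_Icc_self hs)).hasDerivWithinAt.liminf_right_slope_le hr) ha.le
    (fun s hs => (hle s (Ico_subset_Icc_self hs)).trans_eq (add_zero _).symm) t ht
  exact le_antisymm (hbound.trans_eq (gronwallBound_ε0_δ0 C _)) (hnonneg t ht)

section Periodic

open Matrix

variable {d : ℕ} {f g : (Fin d → ℝ) → ℝ} {F : (Fin d → ℝ) → Fin d → ℝ} {m n : WithTop ℕ∞}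

theorem isCompact_cell : IsCompact (cell d) := isCompact_Icc

theorem integrableOn_cell (hf : Continuous f) : IntegrableOn f (cell d) :=
  hf.continuousOn.integrableOn_compact isCompact_cell

theorem exists_add_intCast_mem_cell (x : Fin d → ℝ) :
    ∃ k : Fin d → ℤ, (x + fun i => (k i : ℝ)) ∈ cell d := by
  refine ⟨fun i => -⌊x i⌋, fun i => ?_, fun i => ?_⟩
  · simpa using Int.floor_le (x i)
  · simpa using (Int.lt_floor_add_one (x i)).le.trans_eq (add_comm _ _)

theorem cell_subset_closure_interior : cell d ⊆ closure (interior (cell d)) := by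
  have hne : (interior (cell d)).Nonempty := by
    refine ⟨fun _ => 1 / 2, ?_⟩
    rw [cell, ← pi_univ_Icc, interior_pi_set finite_univ]
    intro i _
    norm_num [interior_Icc]
  have hconvex : Convex ℝ (cell d) := convex_Icc 0 1
  rw [hconvex.closure_interior_eq_closure_of_nonempty_interior hne]
  exact subset_closure

theorem contDiff_grad (hf : ContDiff ℝ n f) (hmn : m + 1 ≤ n) : ContDiff ℝ m (grad f) :=
  contDiff_pi.2 fun _ => (hf.fderiv_right hmn).clm_apply contDiff_const

theorem contDiff_lap (hf : ContDiff ℝ n f) (hmn : m + 2 ≤ n) : ContDiff ℝ m (lap f) := by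
  have hgrad : ContDiff ℝ (m + 1) (grad f) :=
    contDiff_grad hf (by rwa [add_assoc, one_add_one_eq_two])
  exact ContDiff.sum fun i _ =>
    ((contDiff_pi.1 hgrad i).fderiv_right le_rfl).clm_apply contDiff_const

theorem continuous_divg (hF : ContDiff ℝ 1 F) : Continuous (divg F) :=
  continuous_finsetSum _ fun i _ =>
    (((contDiff_pi.1 hF i).fderiv_right (m := 0) (zero_add 1).le).clm_apply
      contDiff_const).continuous

theorem grad_sub (hf : Differentiable ℝ f) (hg : Differentiable ℝ g) (x : Fin d → ℝ) :
    grad (f - g) x = grad f x - grad g x := by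
  ext i
  simp [grad, fderiv_sub (hf x) (hg x)]

theorem divg_smul (hg : Differentiable ℝ g) (hF : Differentiable ℝ F) (x : Fin d → ℝ) :
    divg (g • F) x = g x * divg F x + grad g x ⬝ᵥ F x := by
  have hFi (i : Fin d) : DifferentiableAt ℝ (fun y => F y i) x := differentiable_pi.1 hF i x
  simp only [divg, Pi.smul_apply', Pi.smul_apply, smul_eq_mul, fderiv_fun_mul (hg x) (hFi _),
    dotProduct, grad, Finset.mul_sum, ← Finset.sum_add_distrib]
  refine Finset.sum_congr rfl fun i _ => ?_
  simp [mul_comm]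

theorem lap_sub (hf : ContDiff ℝ 2 f) (hg : ContDiff ℝ 2 g) (x : Fin d → ℝ) :
    lap (f - g) x = lap f x - lap g x := by
  have hgrad {u : (Fin d → ℝ) → ℝ} (hu : ContDiff ℝ 2 u) (i : Fin d) :
      DifferentiableAt ℝ (fun y => grad u y i) x :=
    (contDiff_pi.1 (contDiff_grad hu one_add_one_eq_two.le) i).differentiable one_ne_zero x
  have hfun (i : Fin d) : (fun y => grad (f - g) y i) = fun y => grad f y i - grad g y i := by
    ext y
    rw [grad_sub (hf.differentiable two_ne_zero) (hg.differentiable two_ne_zero), Pi.sub_apply]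
  change ∑ i, fderiv ℝ (fun y => grad (f - g) y i) x _ = _
  simp only [hfun, fderiv_fun_sub (hgrad hf _) (hgrad hg _), _root_.sub_apply,
    Finset.sum_sub_distrib]
  rfl

namespace ZPeriodic

theorem eq_zero_of_cell (hf : ZPeriodic f) (h : ∀ x ∈ cell d, f x = 0) : f = 0 := by
  ext x
  obtain ⟨k, hk⟩ := exists_add_intCast_mem_cell x
  exact (hf x k).symm.trans (h _ hk)

theorem grad_add_intCast (hf : ZPeriodic f) (x : Fin d → ℝ) (k : Fin d → ℤ) :
    grad f (x + fun i => (k i : ℝ)) = grad f x := by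
  have h : (fun y => f (y + fun i => (k i : ℝ))) = f := funext fun y => hf y k
  ext i
  rw [grad, ← fderiv_comp_add_right, h]
  rfl

end ZPeriodic

theorem integral_divg_eq_zero (hF : ContDiff ℝ 1 F) (hper : ∀ i, ZPeriodic fun x => F x i) :
    ∫ x in cell d, divg F x = 0 := by
  obtain _ | n := d
  · simp [divg]
  have hFi (i : Fin (n + 1)) : ContDiff ℝ 1 fun x => F x i := contDiff_pi.1 hF i
  have hdiv := integral_divergence_of_hasFDerivAt_off_countable' (0 : Fin (n + 1) → ℝ) 1
    zero_le_one (fun i x => F x i) (fun i => fderiv ℝ fun x => F x i) ∅ countable_empty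
    (fun i => (hFi i).continuous.continuousOn)
    (fun x _ i => ((hFi i).differentiable one_ne_zero x).hasFDerivAt)
    (integrableOn_cell (continuous_divg hF))
  refine hdiv.trans (Finset.sum_eq_zero fun i _ => sub_eq_zero.2 ?_)
  refine integral_congr_ae (.of_forall fun y => ?_)
  have hface : i.insertNth (1 : ℝ) y =
      i.insertNth (0 : ℝ) y + fun j => ((Pi.single i 1 : Fin (n + 1) → ℤ) j : ℝ) := by
    ext j
    refine Fin.succAboveCases i ?_ (fun k => ?_) j <;> simp
  simpa only [Pi.one_apply, Pi.zero_apply, ← hface] using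
    hper i (i.insertNth (0 : ℝ) y) (Pi.single i 1)

theorem integral_mul_divg (hg : ContDiff ℝ 1 g) (hgper : ZPeriodic g) (hF : ContDiff ℝ 1 F)
    (hFper : ∀ i, ZPeriodic fun x => F x i) :
    ∫ x in cell d, g x * divg F x = -∫ x in cell d, grad g x ⬝ᵥ F x := by
  have hgrad : Continuous (grad g) := (contDiff_grad (m := 0) hg (zero_add 1).le).continuous
  have hzero := integral_divg_eq_zero (hg.smul hF) fun i x k => by
    simp only [Pi.smul_apply', Pi.smul_apply, hgper x k, hFper i x k]
  simp only [divg_smul (hg.differentiable one_ne_zero) (hF.differentiable one_ne_zero)] at hzero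
  rw [integral_add (f := fun x => g x * divg F x)
    (integrableOn_cell (hg.continuous.mul (continuous_divg hF)))
    (integrableOn_cell (hgrad.dotProduct hF.continuous))] at hzero
  exact eq_neg_of_add_eq_zero_left hzero

theorem integral_mul_lap (hg : ContDiff ℝ 1 g) (hgper : ZPeriodic g) (hf : ContDiff ℝ 2 f)
    (hfper : ZPeriodic f) :
    ∫ x in cell d, g x * lap f x = -∫ x in cell d, grad g x ⬝ᵥ grad f x :=
  integral_mul_divg hg hgper (contDiff_grad hf one_add_one_eq_two.le)
    fun i x k => congrFun (hfper.grad_add_intCast x k) i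

theorem eq_zero_of_l2sq_eq_zero (hf : Continuous f) (hper : ZPeriodic f) (h : l2sq f = 0) :
    f = 0 := by
  rw [l2sq, setIntegral_eq_zero_iff_of_nonneg_ae (.of_forall fun x => sq_nonneg (f x))
    (integrableOn_cell (hf.pow 2))] at h
  refine hper.eq_zero_of_cell fun x hx => pow_eq_zero_iff two_ne_zero |>.1 ?_
  exact Measure.eqOn_of_ae_eq h (hf.pow 2).continuousOn continuousOn_const
    cell_subset_closure_interior hx

end Periodic

section Energy

open Matrix

/-- The Helmholtz operator `1 - γΔ`, which is the `L²` gradient of `h1Energy γ`. -/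
def helmholtz {d : ℕ} (γ : ℝ) (u : (Fin d → ℝ) → ℝ) (x : Fin d → ℝ) : ℝ := u x - γ * lap u x

/-- The energy `γ/2 ‖∇u‖₀² + 1/2 ‖u‖₀²`, equivalent to the squared `H¹(Ω)` norm; applied to the
difference of two solutions, it is the quantity estimated by Grönwall's inequality. -/
def h1Energy {d : ℕ} (γ : ℝ) (u : (Fin d → ℝ) → ℝ) : ℝ := γ / 2 * l2sqVec (grad u) + 1 / 2 * l2sq u

variable {d : ℕ} {γ : ℝ} {f g : (Fin d → ℝ) → ℝ} {m n : WithTop ℕ∞}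

theorem contDiff_helmholtz (hf : ContDiff ℝ n f) (hmn : m + 2 ≤ n) :
    ContDiff ℝ m (helmholtz γ f) :=
  (hf.of_le (le_self_add.trans hmn)).sub (contDiff_const.mul (contDiff_lap hf hmn))

theorem helmholtz_sub (hf : ContDiff ℝ 2 f) (hg : ContDiff ℝ 2 g) :
    helmholtz γ (f - g) = helmholtz γ f - helmholtz γ g := by
  ext x
  simp only [helmholtz, lap_sub hf hg, Pi.sub_apply]
  ring

theorem l2sq_nonneg : 0 ≤ l2sq f := integral_nonneg fun _ => sq_nonneg _

theorem l2sqVec_nonneg {F : (Fin d → ℝ) → Fin d → ℝ} : 0 ≤ l2sqVec F :=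
  integral_nonneg fun _ => Finset.sum_nonneg fun _ _ => sq_nonneg _

theorem h1Energy_zero : h1Energy γ (0 : (Fin d → ℝ) → ℝ) = 0 := by
  simp [h1Energy, l2sq, l2sqVec, grad]

theorem h1Energy_nonneg (hγ : 0 ≤ γ) : 0 ≤ h1Energy γ f := by
  have hgrad := l2sqVec_nonneg (F := grad f)
  have hval := l2sq_nonneg (f := f)
  unfold h1Energy
  positivity

theorem h1sq_le_mul_h1Energy (hγ : 0 < γ) : h1sq f ≤ (2 / γ + 2) * h1Energy γ f := by
  have hgrad := l2sqVec_nonneg (F := grad f)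
  have hval := l2sq_nonneg (f := f)
  have hexpand : (2 / γ + 2) * h1Energy γ f =
      h1sq f + (γ * l2sqVec (grad f) + 1 / γ * l2sq f) := by
    unfold h1Energy h1sq
    field_simp
    ring
  rw [hexpand]
  exact le_add_of_nonneg_right (by positivity)

theorem ZPeriodic.eq_zero_of_h1Energy_eq_zero (hper : ZPeriodic f) (hf : Continuous f)
    (hγ : 0 ≤ γ) (h : h1Energy γ f = 0) : f = 0 := by
  have hgrad : 0 ≤ γ / 2 * l2sqVec (grad f) := mul_nonneg (by positivity) l2sqVec_nonneg
  have hval := l2sq_nonneg (f := f)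
  refine eq_zero_of_l2sq_eq_zero hf hper ?_
  unfold h1Energy at h
  linarith

variable {u : ℝ → (Fin d → ℝ) → ℝ}

theorem hasDerivAt_l2sq (hu : ContDiff ℝ 1 (uncurry u)) (t : ℝ) :
    HasDerivAt (fun s => l2sq (u s))
      (2 * ∫ x in cell d, u t x * deriv (fun s => u s x) t) t := by
  refine (hasDerivAt_setIntegral_of_contDiff isCompact_cell (u := fun s x => u s x ^ 2)
    (hu.pow 2) t).congr_deriv ?_
  rw [← integral_const_mul]
  congr with x
  have hux := (hasDerivAt_of_contDiff_uncurry hu t x).differentiableAt.hasDerivAt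
  rw [(hux.fun_pow 2).deriv]
  ring

theorem hasDerivAt_l2sqVec {w : ℝ → (Fin d → ℝ) → Fin d → ℝ} (hw : ContDiff ℝ 1 (uncurry w))
    (t : ℝ) :
    HasDerivAt (fun s => l2sqVec (w s))
      (2 * ∫ x in cell d, deriv (fun s => w s x) t ⬝ᵥ w t x) t := by
  refine (hasDerivAt_setIntegral_of_contDiff isCompact_cell (u := fun s x => ∑ i, w s x i ^ 2)
    (ContDiff.sum fun i _ => (contDiff_pi.1 hw i).pow 2) t).congr_deriv ?_
  rw [← integral_const_mul]
  congr with x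
  have hwx (i : Fin d) : HasDerivAt (fun s => w s x i) (deriv (fun s => w s x) t i) t :=
    hasDerivAt_pi.1 (hasDerivAt_of_contDiff_uncurry hw t x).differentiableAt.hasDerivAt i
  rw [(HasDerivAt.fun_sum fun i _ => (hwx i).fun_pow 2).deriv, dotProduct, Finset.mul_sum]
  refine Finset.sum_congr rfl fun i _ => ?_
  ring

theorem hasDerivAt_l2sqVec_grad (hu : ContDiff ℝ 2 (uncurry u)) (hper : ∀ t, ZPeriodic (u t))
    (t : ℝ) :
    HasDerivAt (fun s => l2sqVec (grad (u s)))
      (-2 * ∫ x in cell d, deriv (fun s => u s x) t * lap (u t) x) t := by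
  have hgrad : ContDiff ℝ 1 (uncurry fun s => grad (u s)) :=
    contDiff_pi.2 fun i =>
      (contDiff_uncurry_fderiv_right hu one_add_one_eq_two.le).clm_apply contDiff_const
  have hcomm (x : Fin d → ℝ) :
      deriv (fun s => grad (u s) x) t = grad (fun y => deriv (fun s => u s y) t) x := by
    ext i
    rw [deriv_pi fun i => differentiableAt_pi.1
      (hasDerivAt_of_contDiff_uncurry hgrad t x).differentiableAt i]
    exact (fderiv_deriv_comm hu t x _).symm
  have hdt : ContDiff ℝ 1 fun y => deriv (fun s => u s y) t :=
    contDiff_of_uncurry (contDiff_uncurry_deriv_left hu one_add_one_eq_two.le) t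
  refine (hasDerivAt_l2sqVec hgrad t).congr_deriv ?_
  simp only [hcomm]
  rw [integral_mul_lap hdt (fun x k => by simp only [hper _ x k]) (contDiff_of_uncurry hu t)
    (hper t)]
  ring

theorem hasDerivAt_h1Energy (hu : ContDiff ℝ 2 (uncurry u)) (hper : ∀ t, ZPeriodic (u t))
    (γ t : ℝ) :
    HasDerivAt (fun s => h1Energy γ (u s))
      (∫ x in cell d, helmholtz γ (u t) x * deriv (fun s => u s x) t) t := by
  have hut : ContDiff ℝ 2 (u t) := contDiff_of_uncurry hu t
  have hlap : Continuous (lap (u t)) := (contDiff_lap (m := 0) hut (zero_add 2).le).continuous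
  have hdt : Continuous fun y => deriv (fun s => u s y) t :=
    (contDiff_of_uncurry (contDiff_uncurry_deriv_left hu one_add_one_eq_two.le) t).continuous
  refine (((hasDerivAt_l2sqVec_grad hu hper t).const_mul (γ / 2)).add
    ((hasDerivAt_l2sq (hu.of_le one_le_two) t).const_mul (1 / 2))).congr_deriv ?_
  have hint : ∫ x in cell d, helmholtz γ (u t) x * deriv (fun s => u s x) t =
      (∫ x in cell d, u t x * deriv (fun s => u s x) t) -
        ∫ x in cell d, γ * (deriv (fun s => u s x) t * lap (u t) x) := by
    rw [← integral_sub]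
    · congr with x
      simp only [helmholtz]
      ring
    · exact integrableOn_cell (hut.continuous.mul hdt)
    · exact integrableOn_cell (continuous_const.mul (hdt.mul hlap))
  rw [hint, integral_const_mul]
  ring

end Energy

section Dissipation

open Matrix
open scoped RealInnerProductSpace

variable {H Q : Type*} [NormedAddCommGroup H] [InnerProductSpace ℝ H] [NormedAddCommGroup Q]
  [NormedSpace ℝ Q]

theorem inner_sub_map_add_le_of_coercive {B : H →L[ℝ] H} {c : ℝ} (hc : 0 < c)
    (hB : ∀ ξ, c * ‖ξ‖ ^ 2 ≤ ⟪ξ, B ξ⟫) (ξ θ G : H) :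
    ⟪θ - ξ, B ξ + G⟫ ≤ (‖B‖ * ‖θ‖ + ‖G‖) ^ 2 / (4 * c) + ‖θ‖ * ‖G‖ := by
  have hθB : ⟪θ, B ξ⟫ ≤ ‖θ‖ * (‖B‖ * ‖ξ‖) :=
    (real_inner_le_norm _ _).trans (by gcongr; exact B.le_opNorm ξ)
  have hξG : -⟪ξ, G⟫ ≤ ‖ξ‖ * ‖G‖ := (neg_le_abs _).trans (abs_real_inner_le_norm ξ G)
  have hyoung : (‖B‖ * ‖θ‖ + ‖G‖) * ‖ξ‖ ≤ c * ‖ξ‖ ^ 2 + (‖B‖ * ‖θ‖ + ‖G‖) ^ 2 / (4 * c) := by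
    have hsq : c * ‖ξ‖ ^ 2 + (‖B‖ * ‖θ‖ + ‖G‖) ^ 2 / (4 * c) - (‖B‖ * ‖θ‖ + ‖G‖) * ‖ξ‖ =
        (2 * c * ‖ξ‖ - (‖B‖ * ‖θ‖ + ‖G‖)) ^ 2 / (4 * c) := by
      field_simp
      ring
    exact sub_nonneg.1 (hsq ▸ by positivity)
  rw [inner_sub_left, inner_add_right, inner_add_right]
  linarith [hB ξ, real_inner_le_norm θ G]

theorem exists_norm_sub_le_mul_of_contDiff [FiniteDimensional ℝ Q] {F : Type*}
    [NormedAddCommGroup F] [NormedSpace ℝ F] {g : Q → F} (hg : ContDiff ℝ 1 g) (R : ℝ) :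
    ∃ K, 0 ≤ K ∧ ∀ q ∈ Metric.closedBall 0 R, ∀ q' ∈ Metric.closedBall 0 R,
      ‖g q - g q'‖ ≤ K * ‖q - q'‖ := by
  have : ProperSpace Q := FiniteDimensional.proper ℝ Q
  obtain ⟨K, hK⟩ := hg.contDiffOn.exists_lipschitzOnWith one_ne_zero
    (convex_closedBall (0 : Q) R) (isCompact_closedBall 0 R)
  exact ⟨K, K.2, fun q hq q' hq' => hK.norm_sub_le hq hq'⟩

theorem exists_inner_sub_le_of_coercive [FiniteDimensional ℝ Q] {A : Q → H →L[ℝ] H} {Ψ : Q → H}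
    (hA : ContDiff ℝ 1 A) (hΨ : ContDiff ℝ 1 Ψ) {c : ℝ} (hc : 0 < c)
    (hcoercive : ∀ q ξ, c * ‖ξ‖ ^ 2 ≤ ⟪ξ, A q ξ⟫) (R : ℝ) :
    ∃ C, 0 ≤ C ∧ ∀ q ∈ Metric.closedBall 0 R, ∀ q' ∈ Metric.closedBall 0 R, ∀ ζ ζ' : H,
      ‖ζ'‖ ≤ R → ⟪(Ψ q - Ψ q') - (ζ - ζ'), A q ζ - A q' ζ'⟫ ≤ C * ‖q - q'‖ ^ 2 := by
  obtain hR | hR := lt_or_ge R 0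
  · exact ⟨0, le_rfl, fun q _ q' _ ζ ζ' hζ' => absurd (norm_nonneg ζ') (hζ'.trans_lt hR).not_ge⟩
  have : ProperSpace Q := FiniteDimensional.proper ℝ Q
  obtain ⟨M, hM⟩ := (isCompact_closedBall (0 : Q) R).exists_bound_of_continuousOn
    hA.continuous.continuousOn
  obtain ⟨K, hK₀, hK⟩ := exists_norm_sub_le_mul_of_contDiff hA R
  obtain ⟨N, hN₀, hN⟩ := exists_norm_sub_le_mul_of_contDiff hΨ R
  refine ⟨(M * N + K * R) ^ 2 / (4 * c) + N * (K * R), by positivity,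
    fun q hq q' hq' ζ ζ' hζ' => ?_⟩
  have hsplit : A q ζ - A q' ζ' = A q (ζ - ζ') + (A q - A q') ζ' := by
    simp only [map_sub, _root_.sub_apply, sub_add_sub_cancel]
  have hG : ‖(A q - A q') ζ'‖ ≤ K * ‖q - q'‖ * R :=
    (A q - A q').le_of_opNorm_le_of_le (hK q hq q' hq') hζ'
  have hM₀ : 0 ≤ M := (norm_nonneg _).trans (hM q hq)
  calc ⟪(Ψ q - Ψ q') - (ζ - ζ'), A q ζ - A q' ζ'⟫
      ≤ (‖A q‖ * ‖Ψ q - Ψ q'‖ + ‖(A q - A q') ζ'‖) ^ 2 / (4 * c)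
          + ‖Ψ q - Ψ q'‖ * ‖(A q - A q') ζ'‖ := by
        rw [hsplit]
        exact inner_sub_map_add_le_of_coercive hc (hcoercive q) _ _ _
    _ ≤ (M * (N * ‖q - q'‖) + K * ‖q - q'‖ * R) ^ 2 / (4 * c)
          + N * ‖q - q'‖ * (K * ‖q - q'‖ * R) := by
        gcongr
        exacts [hM q hq, hN q hq q' hq', hN q hq q' hq']
    _ = ((M * N + K * R) ^ 2 / (4 * c) + N * (K * R)) * ‖q - q'‖ ^ 2 := by ring

theorem exists_dotProduct_sub_le_of_coercive [FiniteDimensional ℝ Q] {ι : Type*} [Fintype ι]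
    {M : Q → Matrix ι ι ℝ} {Ψ : Q → ι → ℝ} (hM : ∀ i j, ContDiff ℝ 1 fun q => M q i j)
    (hΨ : ContDiff ℝ 1 Ψ) {c : ℝ} (hc : 0 < c)
    (hcoercive : ∀ q ξ, c * (ξ ⬝ᵥ ξ) ≤ ξ ⬝ᵥ M q *ᵥ ξ) (R : ℝ) :
    ∃ C, 0 ≤ C ∧ ∀ q ∈ Metric.closedBall 0 R, ∀ q' ∈ Metric.closedBall 0 R, ∀ ζ ζ' : ι → ℝ,
      ‖WithLp.toLp 2 ζ'‖ ≤ R →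
        ((Ψ q - Ψ q') - (ζ - ζ')) ⬝ᵥ (M q *ᵥ ζ - M q' *ᵥ ζ') ≤ C * ‖q - q'‖ ^ 2 := by
  classical
  have hA : ContDiff ℝ 1 fun q => toEuclideanCLM (𝕜 := ℝ) (M q) := by
    refine contDiff_clm_apply_iff.2 fun ξ => contDiff_euclidean.2 fun i => ?_
    exact ContDiff.sum fun j _ => (hM i j).mul contDiff_const
  obtain ⟨C, hC₀, hC⟩ := exists_inner_sub_le_of_coercive hA (Ψ := fun q => WithLp.toLp 2 (Ψ q))
    (PiLp.contDiff_toLp.comp hΨ) hc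
    (fun q ξ => by
      simpa [inner_toEuclideanCLM, EuclideanSpace.real_norm_sq_eq, dotProduct, ← pow_two]
        using hcoercive q (WithLp.ofLp ξ)) R
  refine ⟨C, hC₀, fun q hq q' hq' ζ ζ' hζ' => ?_⟩
  have h := hC q hq q' hq' (WithLp.toLp 2 ζ) (WithLp.toLp 2 ζ') hζ'
  simpa [toEuclideanCLM_toLp, ← WithLp.toLp_sub, EuclideanSpace.inner_toLp_toLp,
    dotProduct_comm] using h

theorem exists_norm_le_of_continuous_uncurry {X F : Type*} [TopologicalSpace X]
    [NormedAddCommGroup F] {K : Set X} (hK : IsCompact K) {w : ℝ → X → F}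
    (hw : Continuous (uncurry w)) (a b : ℝ) : ∃ R, ∀ t ∈ Icc a b, ∀ x ∈ K, ‖w t x‖ ≤ R := by
  obtain ⟨R, hR⟩ :=
    (isCompact_Icc.prod hK).exists_bound_of_continuousOn (f := uncurry w) hw.continuousOn
  exact ⟨R, fun t ht x hx => hR (t, x) ⟨ht, hx⟩⟩

theorem exists_setIntegral_dotProduct_sub_le [FiniteDimensional ℝ Q] {ι X : Type*} [Fintype ι]
    [TopologicalSpace X] [T2Space X] [MeasurableSpace X] [OpensMeasurableSpace X] {μ : Measure X}
    [IsFiniteMeasureOnCompacts μ] {K : Set X} (hK : IsCompact K)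
    {M : Q → Matrix ι ι ℝ} {Ψ : Q → ι → ℝ} (hM : ∀ i j, ContDiff ℝ 1 fun q => M q i j)
    (hΨ : ContDiff ℝ 1 Ψ) {c : ℝ} (hc : 0 < c)
    (hcoercive : ∀ q ξ, c * (ξ ⬝ᵥ ξ) ≤ ξ ⬝ᵥ M q *ᵥ ξ) {q q' : ℝ → X → Q} {ζ ζ' : ℝ → X → ι → ℝ}
    (hq : Continuous (uncurry q)) (hq' : Continuous (uncurry q'))
    (hζ : Continuous (uncurry ζ)) (hζ' : Continuous (uncurry ζ')) (a b : ℝ) :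
    ∃ C, 0 ≤ C ∧ ∀ t ∈ Icc a b,
      ∫ x in K, ((Ψ (q t x) - Ψ (q' t x)) - (ζ t x - ζ' t x)) ⬝ᵥ
          (M (q t x) *ᵥ ζ t x - M (q' t x) *ᵥ ζ' t x) ∂μ ≤
        C * ∫ x in K, ‖q t x - q' t x‖ ^ 2 ∂μ := by
  obtain ⟨R, hR⟩ := exists_norm_le_of_continuous_uncurry hK (w := fun t x =>
    (q t x, q' t x, WithLp.toLp 2 (ζ' t x)))
    (hq.prodMk (hq'.prodMk ((PiLp.continuous_toLp 2 _).comp hζ'))) a b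
  obtain ⟨C, hC, hpointwise⟩ := exists_dotProduct_sub_le_of_coercive hM hΨ hc hcoercive R
  refine ⟨C, hC, fun t ht => ?_⟩
  have hqt : Continuous (q t) := hq.uncurry_left t
  have hqt' : Continuous (q' t) := hq'.uncurry_left t
  have hζt : Continuous (ζ t) := hζ.uncurry_left t
  have hζt' : Continuous (ζ' t) := hζ'.uncurry_left t
  have hMc : Continuous M := continuous_matrix fun i j => (hM i j).continuous
  have hΨc := hΨ.continuous
  have hleft : Continuous fun x => ((Ψ (q t x) - Ψ (q' t x)) - (ζ t x - ζ' t x)) ⬝ᵥ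
      (M (q t x) *ᵥ ζ t x - M (q' t x) *ᵥ ζ' t x) :=
    Continuous.dotProduct (by fun_prop) (((hMc.comp hqt).matrix_mulVec hζt).sub
      ((hMc.comp hqt').matrix_mulVec hζt'))
  have hright : Continuous fun x => C * ‖q t x - q' t x‖ ^ 2 := by fun_prop
  rw [← integral_const_mul]
  refine setIntegral_mono_on (hleft.continuousOn.integrableOn_compact hK)
    (hright.continuousOn.integrableOn_compact hK) hK.measurableSet fun x hx => ?_
  obtain ⟨hxq, hxq', hxζ'⟩ : ‖q t x‖ ≤ R ∧ ‖q' t x‖ ≤ R ∧ ‖WithLp.toLp 2 (ζ' t x)‖ ≤ R := by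
    simpa only [Prod.norm_def, max_le_iff] using hR t ht x hx
  exact hpointwise _ (mem_closedBall_zero_iff.2 hxq) _ (mem_closedBall_zero_iff.2 hxq') _ _ hxζ'

end Dissipation

section System

open Matrix

variable {d : ℕ} {n : WithTop ℕ∞}

section Fields

variable {L : Args d → Matrix (Fin d ⊕ Unit) (Fin d ⊕ Unit) ℝ} {ρ η u w : (Fin d → ℝ) → ℝ}

/-- The flux `J = L(ρ,∇ρ,η,∇η) (∇u, w)`. For `u = μ_ρ` and `w = μ_η` the system reads
`∂_t ρ = div (J₁,…,J_d)`, `∂_t η = -J_{d+1}`. -/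
def flux (L : Args d → Matrix (Fin d ⊕ Unit) (Fin d ⊕ Unit) ℝ) (ρ η u w : (Fin d → ℝ) → ℝ)
    (x : Fin d → ℝ) : Fin d ⊕ Unit → ℝ :=
  L (mobArgs ρ η x) *ᵥ dvec (grad u x) (w x)

/-- The vector `(∇(∂_ρ f(ρ,η) - ρ), ∂_η f(ρ,η) - η)`, expanded by the chain rule so that it becomes
a function of `q = (ρ,∇ρ,η,∇η)`. It is the difference between `(∇μ_ρ, μ_η)` and the `L²` gradient
of the energy. -/
def reactionForce (f : ℝ → ℝ → ℝ) (q : Args d) : Fin d ⊕ Unit → ℝ :=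
  dvec (fun i => fderiv ℝ (fun p : ℝ × ℝ => pdRho f p.1 p.2 - p.1) (q.1, q.2.2.1)
    (q.2.1 i, q.2.2.2 i)) (pdEta f q.1 q.2.2.1 - q.2.2.1)

theorem dvec_sub (g g' : Fin d → ℝ) (s s' : ℝ) :
    dvec (g - g') (s - s') = dvec g s - dvec g' s' := by
  ext (i | i) <;> rfl

theorem dvec_dotProduct (g : Fin d → ℝ) (s : ℝ) (v : Fin d ⊕ Unit → ℝ) :
    dvec g s ⬝ᵥ v = g ⬝ᵥ (fun i => v (.inl i)) + s * v (.inr ()) := by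
  simp [dvec, dotProduct, Fintype.sum_sum_type]

theorem qform_eq_dotProduct (M : Matrix (Fin d ⊕ Unit) (Fin d ⊕ Unit) ℝ) (ξ : Fin d ⊕ Unit → ℝ) :
    qform M ξ = ξ ⬝ᵥ M *ᵥ ξ := by
  simp only [qform, dotProduct, mulVec, Finset.mul_sum, mul_assoc]

theorem contDiff_dvec {E : Type*} [NormedAddCommGroup E] [NormedSpace ℝ E] {g : E → Fin d → ℝ}
    {s : E → ℝ} (hg : ContDiff ℝ n g) (hs : ContDiff ℝ n s) :
    ContDiff ℝ n fun x => dvec (g x) (s x) := by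
  refine contDiff_pi.2 fun j => ?_
  rcases j with i | i
  exacts [contDiff_pi.1 hg i, hs]

theorem contDiff_mobArgs (hρ : ContDiff ℝ (n + 1) ρ) (hη : ContDiff ℝ (n + 1) η) :
    ContDiff ℝ n (mobArgs ρ η) :=
  (hρ.of_le le_self_add).prodMk ((contDiff_grad hρ le_rfl).prodMk
    ((hη.of_le le_self_add).prodMk (contDiff_grad hη le_rfl)))

theorem contDiff_flux (hL : ∀ i j, ContDiff ℝ n fun q => L q i j) (hρ : ContDiff ℝ (n + 1) ρ)
    (hη : ContDiff ℝ (n + 1) η) (hu : ContDiff ℝ (n + 1) u) (hw : ContDiff ℝ n w) :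
    ContDiff ℝ n (flux L ρ η u w) :=
  contDiff_pi.2 fun i => ContDiff.sum (s := Finset.univ) fun j _ =>
    ((hL i j).comp (contDiff_mobArgs hρ hη)).mul
      (contDiff_pi.1 (contDiff_dvec (contDiff_grad hu le_rfl) hw) j)

theorem contDiff_reactionForce {f : ℝ → ℝ → ℝ} (hf : ContDiff ℝ (n + 2) (uncurry f)) :
    ContDiff ℝ n (reactionForce (d := d) f) := by
  have hn : n + 1 + 1 ≤ n + 2 := by rw [add_assoc, one_add_one_eq_two]
  have hρ : ContDiff ℝ (n + 1) fun p : ℝ × ℝ => pdRho f p.1 p.2 - p.1 :=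
    (contDiff_uncurry_deriv_left hf hn).sub contDiff_fst
  have hη : ContDiff ℝ (n + 1) fun p : ℝ × ℝ => pdEta f p.1 p.2 - p.2 :=
    (contDiff_uncurry_deriv_right hf hn).sub contDiff_snd
  have hvals : ContDiff ℝ n fun q : Args d => (q.1, q.2.2.1) := by fun_prop
  refine contDiff_dvec (contDiff_pi.2 fun i => ?_) ((hη.of_le le_self_add).comp hvals)
  exact ((hρ.fderiv_right le_rfl).comp hvals).clm_apply (by fun_prop)

theorem reactionForce_mobArgs {f : ℝ → ℝ → ℝ} (hf : ContDiff ℝ 2 (uncurry f))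
    (hρ : Differentiable ℝ ρ) (hη : Differentiable ℝ η) (x : Fin d → ℝ) :
    reactionForce f (mobArgs ρ η x) =
      dvec (grad (fun y => pdRho f (ρ y) (η y) - ρ y) x) (pdEta f (ρ x) (η x) - η x) := by
  have hD : Differentiable ℝ fun p : ℝ × ℝ => pdRho f p.1 p.2 - p.1 :=
    ((contDiff_uncurry_deriv_left hf one_add_one_eq_two.le).sub contDiff_fst).differentiable
      one_ne_zero
  have hcomp := (hD (ρ x, η x)).hasFDerivAt.comp x
    ((hρ x).hasFDerivAt.prodMk (hη x).hasFDerivAt)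
  unfold reactionForce
  congr 1
  ext i
  exact (DFunLike.congr_fun hcomp.fderiv (Pi.single i 1)).symm

theorem mobArgs_sub {ρh ηh : (Fin d → ℝ) → ℝ} (hρ : Differentiable ℝ ρ) (hη : Differentiable ℝ η)
    (hρh : Differentiable ℝ ρh) (hηh : Differentiable ℝ ηh) (x : Fin d → ℝ) :
    mobArgs (ρ - ρh) (η - ηh) x = mobArgs ρ η x - mobArgs ρh ηh x := by
  simp only [mobArgs, grad_sub hρ hρh, grad_sub hη hηh, Pi.sub_apply, Prod.mk_sub_mk]

theorem pi_norm_sq_le_sum {ι : Type*} [Fintype ι] (v : ι → ℝ) : ‖v‖ ^ 2 ≤ ∑ i, v i ^ 2 := by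
  rw [← Real.le_sqrt (norm_nonneg v) (Finset.sum_nonneg fun i _ => sq_nonneg (v i)),
    pi_norm_le_iff_of_nonneg (Real.sqrt_nonneg _)]
  exact fun i => Real.abs_le_sqrt
    (Finset.single_le_sum (fun j _ => sq_nonneg (v j)) (Finset.mem_univ i))

theorem prod_norm_sq_le_add {E F : Type*} [NormedAddCommGroup E] [NormedAddCommGroup F]
    (p : E × F) : ‖p‖ ^ 2 ≤ ‖p.1‖ ^ 2 + ‖p.2‖ ^ 2 := by
  obtain h | h := max_choice ‖p.1‖ ‖p.2‖ <;> rw [Prod.norm_def, h]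
  exacts [le_add_of_nonneg_right (sq_nonneg _), le_add_of_nonneg_left (sq_nonneg _)]

theorem norm_sq_mobArgs_le (ρ η : (Fin d → ℝ) → ℝ) (x : Fin d → ℝ) :
    ‖mobArgs ρ η x‖ ^ 2 ≤ (ρ x ^ 2 + ∑ i, grad ρ x i ^ 2) + (η x ^ 2 + ∑ i, grad η x i ^ 2) := by
  have hη := prod_norm_sq_le_add (η x, grad η x)
  have hρη := prod_norm_sq_le_add (grad ρ x, η x, grad η x)
  have hall := prod_norm_sq_le_add (mobArgs ρ η x)
  simp only [mobArgs, Real.norm_eq_abs, sq_abs] at hη hρη hall ⊢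
  linarith [pi_norm_sq_le_sum (grad ρ x), pi_norm_sq_le_sum (grad η x)]

theorem integral_norm_sq_mobArgs_le (hρ : ContDiff ℝ 1 ρ) (hη : ContDiff ℝ 1 η) :
    ∫ x in cell d, ‖mobArgs ρ η x‖ ^ 2 ≤ h1sq ρ + h1sq η := by
  have hgrad {v : (Fin d → ℝ) → ℝ} (hv : ContDiff ℝ 1 v) : Continuous (grad v) :=
    (contDiff_grad (m := 0) hv (zero_add 1).le).continuous
  have hgρ := hgrad hρ
  have hgη := hgrad hη
  have hcρ := hρ.continuous
  have hcη := hη.continuous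
  have hq : Continuous (mobArgs ρ η) := (contDiff_mobArgs (n := 0) hρ hη).continuous
  have hsplit : h1sq ρ + h1sq η = ∫ x in cell d,
      ((ρ x ^ 2 + ∑ i, grad ρ x i ^ 2) + (η x ^ 2 + ∑ i, grad η x i ^ 2)) := by
    rw [integral_add (integrableOn_cell (by fun_prop)) (integrableOn_cell (by fun_prop)),
      integral_add (integrableOn_cell (by fun_prop)) (integrableOn_cell (by fun_prop)),
      integral_add (integrableOn_cell (by fun_prop)) (integrableOn_cell (by fun_prop))]
    rfl
  rw [hsplit]
  exact setIntegral_mono (integrableOn_cell (by fun_prop)) (integrableOn_cell (by fun_prop))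
    fun x => norm_sq_mobArgs_le ρ η x

namespace ZPeriodic

theorem mobArgs_add_intCast (hρ : ZPeriodic ρ) (hη : ZPeriodic η) (x : Fin d → ℝ)
    (k : Fin d → ℤ) : mobArgs ρ η (x + fun i => (k i : ℝ)) = mobArgs ρ η x := by
  simp only [mobArgs, hρ x k, hη x k, hρ.grad_add_intCast, hη.grad_add_intCast]

theorem flux_add_intCast (hρ : ZPeriodic ρ) (hη : ZPeriodic η) (hu : ZPeriodic u)
    (hw : ZPeriodic w) (x : Fin d → ℝ) (k : Fin d → ℤ) :
    flux L ρ η u w (x + fun i => (k i : ℝ)) = flux L ρ η u w x := by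
  simp only [flux, hρ.mobArgs_add_intCast hη, hu.grad_add_intCast, hw x k]

theorem helmholtz_add_intCast (hu : ZPeriodic u) (γ : ℝ) (x : Fin d → ℝ) (k : Fin d → ℤ) :
    helmholtz γ u (x + fun i => (k i : ℝ)) = helmholtz γ u x := by
  have hlap : lap u (x + fun i => (k i : ℝ)) = lap u x :=
    Finset.sum_congr rfl fun i _ => congrFun (grad_add_intCast
      (fun y l => congrFun (hu.grad_add_intCast y l) i) x k) i
  simp only [helmholtz, hu x k, hlap]

end ZPeriodic

end Fields

section Solutions

namespace SmoothPer

variable {u v : ℝ → (Fin d → ℝ) → ℝ}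

theorem contDiff_uncurry (hu : SmoothPer d u) (n : ℕ) : ContDiff ℝ n (uncurry u) :=
  hu.1.of_le (mod_cast le_top)

theorem contDiff (hu : SmoothPer d u) (n : ℕ) (t : ℝ) : ContDiff ℝ n (u t) :=
  contDiff_of_uncurry (hu.contDiff_uncurry n) t

theorem differentiable (hu : SmoothPer d u) (t : ℝ) : Differentiable ℝ (u t) :=
  (hu.contDiff 1 t).differentiable one_ne_zero

theorem sub (hu : SmoothPer d u) (hv : SmoothPer d v) : SmoothPer d fun t => u t - v t :=
  ⟨hu.1.sub hv.1, fun t x k => by simp only [Pi.sub_apply, hu.2 t x k, hv.2 t x k]⟩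

theorem hasDerivAt (hu : SmoothPer d u) (t : ℝ) (x : Fin d → ℝ) :
    HasDerivAt (fun s => u s x) (deriv (fun s => u s x) t) t :=
  (hasDerivAt_of_contDiff_uncurry (hu.contDiff_uncurry 1) t x).differentiableAt.hasDerivAt

theorem deriv_sub (hu : SmoothPer d u) (hv : SmoothPer d v) (t : ℝ) (x : Fin d → ℝ) :
    deriv (fun s => (u s - v s) x) t = deriv (fun s => u s x) t - deriv (fun s => v s x) t :=
  ((hu.hasDerivAt t x).sub (hv.hasDerivAt t x)).deriv

theorem continuous_deriv (hu : SmoothPer d u) (t : ℝ) :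
    Continuous fun x => deriv (fun s => u s x) t :=
  (contDiff_of_uncurry
    (contDiff_uncurry_deriv_left (m := 0) (hu.contDiff_uncurry 1) (zero_add 1).le) t).continuous

theorem continuous_uncurry_grad (hu : SmoothPer d u) : Continuous (uncurry fun t => grad (u t)) :=
  continuous_pi fun _ =>
    ((contDiff_uncurry_fderiv_right (m := 0) (hu.contDiff_uncurry 1) (zero_add 1).le).clm_apply
      contDiff_const).continuous

theorem continuous_uncurry_mobArgs (hu : SmoothPer d u) (hv : SmoothPer d v) :
    Continuous (uncurry fun t => mobArgs (u t) (v t)) :=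
  hu.1.continuous.prodMk (hu.continuous_uncurry_grad.prodMk
    (hv.1.continuous.prodMk hv.continuous_uncurry_grad))

theorem continuous_uncurry_dvec_grad (hu : SmoothPer d u) (hv : SmoothPer d v) :
    Continuous (uncurry fun t x => dvec (grad (u t) x) (v t x)) :=
  (contDiff_dvec (contDiff_zero.2 hu.continuous_uncurry_grad) (hv.contDiff_uncurry 0)).continuous

end SmoothPer

variable {T γρ γη : ℝ} {f : ℝ → ℝ → ℝ} {L : Args d → Matrix (Fin d ⊕ Unit) (Fin d ⊕ Unit) ℝ}
  {ρ η μρ μη ρh ηh μρh μηh : ℝ → (Fin d → ℝ) → ℝ}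

/-- A classical solution on `[0,T]` of the coupled Cahn–Hilliard/Allen–Cahn system: four smooth
`ℤ^d`-periodic functions satisfying the equations pointwise. -/
structure IsClassicalSolution (T γρ γη : ℝ) (f : ℝ → ℝ → ℝ)
    (L : Args d → Matrix (Fin d ⊕ Unit) (Fin d ⊕ Unit) ℝ) (ρ η μρ μη : ℝ → (Fin d → ℝ) → ℝ) :
    Prop where
  smoothPer_rho : SmoothPer d ρ
  smoothPer_eta : SmoothPer d η
  smoothPer_muRho : SmoothPer d μρ
  smoothPer_muEta : SmoothPer d μη
  solves : Solves d T γρ γη f L ρ η μρ μη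

namespace IsClassicalSolution

variable {t : ℝ}

theorem deriv_rho_eq_divg (h : IsClassicalSolution T γρ γη f L ρ η μρ μη) (ht : t ∈ Icc 0 T)
    (x : Fin d → ℝ) : deriv (fun s => ρ s x) t =
      divg (fun y i => flux L (ρ t) (η t) (μρ t) (μη t) y (.inl i)) x := by
  simp [(h.solves t ht x).1, flux, mulVec, dotProduct, dvec, Fintype.sum_sum_type]

theorem deriv_eta_eq_neg (h : IsClassicalSolution T γρ γη f L ρ η μρ μη) (ht : t ∈ Icc 0 T)
    (x : Fin d → ℝ) :
    deriv (fun s => η s x) t = -flux L (ρ t) (η t) (μρ t) (μη t) x (.inr ()) := by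
  simp [(h.solves t ht x).2.2.1, flux, mulVec, dotProduct, dvec, Fintype.sum_sum_type]

theorem contDiff_flux (h : IsClassicalSolution T γρ γη f L ρ η μρ μη)
    (hL : ∀ i j, ContDiff ℝ 1 fun q => L q i j) (t : ℝ) :
    ContDiff ℝ 1 (flux L (ρ t) (η t) (μρ t) (μη t)) :=
  _root_.contDiff_flux hL (h.smoothPer_rho.contDiff 2 t) (h.smoothPer_eta.contDiff 2 t)
    (h.smoothPer_muRho.contDiff 2 t) (h.smoothPer_muEta.contDiff 1 t)

theorem integral_mul_deriv_add (h : IsClassicalSolution T γρ γη f L ρ η μρ μη)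
    (hL : ∀ i j, ContDiff ℝ 1 fun q => L q i j) (ht : t ∈ Icc 0 T) {φ ψ : (Fin d → ℝ) → ℝ}
    (hφ : ContDiff ℝ 1 φ) (hφper : ZPeriodic φ) (hψ : Continuous ψ) :
    (∫ x in cell d, φ x * deriv (fun s => ρ s x) t) +
        ∫ x in cell d, ψ x * deriv (fun s => η s x) t =
      -∫ x in cell d, dvec (grad φ x) (ψ x) ⬝ᵥ flux L (ρ t) (η t) (μρ t) (μη t) x := by
  have hJ : ContDiff ℝ 1 (flux L (ρ t) (η t) (μρ t) (μη t)) := h.contDiff_flux hL t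
  have hJper := (h.smoothPer_rho.2 t).flux_add_intCast (L := L) (h.smoothPer_eta.2 t)
    (h.smoothPer_muRho.2 t) (h.smoothPer_muEta.2 t)
  have hgrad : Continuous (grad φ) := (contDiff_grad (m := 0) hφ (zero_add 1).le).continuous
  have hJcont := hJ.continuous
  simp only [h.deriv_rho_eq_divg ht, h.deriv_eta_eq_neg ht, dvec_dotProduct]
  rw [integral_mul_divg hφ hφper (contDiff_pi.2 fun i => contDiff_pi.1 hJ (.inl i))
    fun i x k => congrFun (hJper x k) (.inl i)]
  simp only [mul_neg]
  rw [integral_neg, ← neg_add, ← integral_add]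
  · exact integrableOn_cell (hgrad.dotProduct (by fun_prop))
  · exact integrableOn_cell (by fun_prop)

theorem dvec_helmholtz (h : IsClassicalSolution T γρ γη f L ρ η μρ μη)
    (hf : ContDiff ℝ 2 (uncurry f)) (ht : t ∈ Icc 0 T) (x : Fin d → ℝ) :
    dvec (grad (helmholtz γρ (ρ t)) x) (helmholtz γη (η t) x) =
      dvec (grad (μρ t) x) (μη t x) - reactionForce f (mobArgs (ρ t) (η t) x) := by
  have hρ : helmholtz γρ (ρ t) = μρ t - fun y => pdRho f (ρ t y) (η t y) - ρ t y := by
    ext y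
    simp only [helmholtz, Pi.sub_apply, (h.solves t ht y).2.1]
    ring
  have hη : helmholtz γη (η t) x = μη t x - (pdEta f (ρ t x) (η t x) - η t x) := by
    simp only [helmholtz, (h.solves t ht x).2.2.2]
    ring
  have hforce : Differentiable ℝ fun y => pdRho f (ρ t y) (η t y) - ρ t y :=
    (((contDiff_uncurry_deriv_left hf one_add_one_eq_two.le).comp
      ((h.smoothPer_rho.contDiff 1 t).prodMk (h.smoothPer_eta.contDiff 1 t))).sub
        (h.smoothPer_rho.contDiff 1 t)).differentiable one_ne_zero
  rw [hρ, hη, grad_sub (h.smoothPer_muRho.differentiable t) hforce, dvec_sub,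
    reactionForce_mobArgs hf (h.smoothPer_rho.differentiable t) (h.smoothPer_eta.differentiable t)]

theorem integral_mul_deriv_sub_add (h : IsClassicalSolution T γρ γη f L ρ η μρ μη)
    (hh : IsClassicalSolution T γρ γη f L ρh ηh μρh μηh)
    (hL : ∀ i j, ContDiff ℝ 1 fun q => L q i j) (ht : t ∈ Icc 0 T) {φ ψ : (Fin d → ℝ) → ℝ}
    (hφ : ContDiff ℝ 1 φ) (hφper : ZPeriodic φ) (hψ : Continuous ψ) :
    (∫ x in cell d, φ x * deriv (fun s => (ρ s - ρh s) x) t) +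
        ∫ x in cell d, ψ x * deriv (fun s => (η s - ηh s) x) t =
      ∫ x in cell d, -dvec (grad φ x) (ψ x) ⬝ᵥ
        (flux L (ρ t) (η t) (μρ t) (μη t) x - flux L (ρh t) (ηh t) (μρh t) (μηh t) x) := by
  have hgrad : Continuous (grad φ) := (contDiff_grad (m := 0) hφ (zero_add 1).le).continuous
  have hdvec : Continuous fun x => dvec (grad φ x) (ψ x) :=
    (contDiff_dvec (n := 0) (contDiff_zero.2 hgrad) (contDiff_zero.2 hψ)).continuous
  have hint {J : (Fin d → ℝ) → Fin d ⊕ Unit → ℝ} (hJ : Continuous J) :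
      IntegrableOn (fun x => -(dvec (grad φ x) (ψ x) ⬝ᵥ J x)) (cell d) :=
    integrableOn_cell (hdvec.dotProduct hJ).neg
  have hφc := hφ.continuous
  have hρt := h.smoothPer_rho.continuous_deriv t
  have hηt := h.smoothPer_eta.continuous_deriv t
  have hρht := hh.smoothPer_rho.continuous_deriv t
  have hηht := hh.smoothPer_eta.continuous_deriv t
  simp only [h.smoothPer_rho.deriv_sub hh.smoothPer_rho, h.smoothPer_eta.deriv_sub hh.smoothPer_eta,
    mul_sub, dotProduct_sub, neg_dotProduct]
  rw [integral_sub (integrableOn_cell (by fun_prop)) (integrableOn_cell (by fun_prop)),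
    integral_sub (integrableOn_cell (by fun_prop)) (integrableOn_cell (by fun_prop)),
    integral_sub (hint (h.contDiff_flux hL t).continuous)
      (hint (hh.contDiff_flux hL t).continuous),
    integral_neg, integral_neg, ← h.integral_mul_deriv_add hL ht hφ hφper hψ,
    ← hh.integral_mul_deriv_add hL ht hφ hφper hψ]
  ring

theorem dvec_helmholtz_sub (h : IsClassicalSolution T γρ γη f L ρ η μρ μη)
    (hh : IsClassicalSolution T γρ γη f L ρh ηh μρh μηh) (hf : ContDiff ℝ 2 (uncurry f))
    (ht : t ∈ Icc 0 T) (x : Fin d → ℝ) :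
    dvec (grad (helmholtz γρ (ρ t - ρh t)) x) (helmholtz γη (η t - ηh t) x) =
      (dvec (grad (μρ t) x) (μη t x) - dvec (grad (μρh t) x) (μηh t x)) -
        (reactionForce f (mobArgs (ρ t) (η t) x) -
          reactionForce f (mobArgs (ρh t) (ηh t) x)) := by
  have hdiff {u : ℝ → (Fin d → ℝ) → ℝ} (hu : SmoothPer d u) :
      Differentiable ℝ (helmholtz γρ (u t)) :=
    (contDiff_helmholtz (m := 1) (hu.contDiff 3 t) (by norm_num)).differentiable
      one_ne_zero
  rw [helmholtz_sub (h.smoothPer_rho.contDiff 2 t) (hh.smoothPer_rho.contDiff 2 t),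
    helmholtz_sub (h.smoothPer_eta.contDiff 2 t) (hh.smoothPer_eta.contDiff 2 t),
    grad_sub (hdiff h.smoothPer_rho) (hdiff hh.smoothPer_rho), Pi.sub_apply, dvec_sub,
    h.dvec_helmholtz hf ht, hh.dvec_helmholtz hf ht, sub_sub_sub_comm]

theorem hasDerivAt_h1Energy_sub (h : IsClassicalSolution T γρ γη f L ρ η μρ μη)
    (hh : IsClassicalSolution T γρ γη f L ρh ηh μρh μηh)
    (hL : ∀ i j, ContDiff ℝ 1 fun q => L q i j) (hf : ContDiff ℝ 2 (uncurry f))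
    (ht : t ∈ Icc 0 T) :
    HasDerivAt (fun s => h1Energy γρ (ρ s - ρh s) + h1Energy γη (η s - ηh s))
      (∫ x in cell d,
        ((reactionForce f (mobArgs (ρ t) (η t) x) - reactionForce f (mobArgs (ρh t) (ηh t) x)) -
          (dvec (grad (μρ t) x) (μη t x) - dvec (grad (μρh t) x) (μηh t x))) ⬝ᵥ
        (flux L (ρ t) (η t) (μρ t) (μη t) x - flux L (ρh t) (ηh t) (μρh t) (μηh t) x)) t := by
  have hρ := h.smoothPer_rho.sub hh.smoothPer_rho
  have hη := h.smoothPer_eta.sub hh.smoothPer_eta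
  refine ((hasDerivAt_h1Energy (hρ.contDiff_uncurry 2) hρ.2 γρ t).add
    (hasDerivAt_h1Energy (hη.contDiff_uncurry 2) hη.2 γη t)).congr_deriv ?_
  rw [h.integral_mul_deriv_sub_add hh hL ht
    (contDiff_helmholtz (hρ.contDiff 3 t) (by norm_num))
    ((hρ.2 t).helmholtz_add_intCast γρ)
    (contDiff_helmholtz (m := 0) (hη.contDiff 2 t) (zero_add 2).le).continuous]
  simp only [h.dvec_helmholtz_sub hh hf ht, neg_sub]

theorem exists_deriv_le_mul_h1Energy_sub (h : IsClassicalSolution T γρ γη f L ρ η μρ μη)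
    (hh : IsClassicalSolution T γρ γη f L ρh ηh μρh μηh) (hγρ : 0 < γρ) (hγη : 0 < γη)
    (hL : ∀ i j, ContDiff ℝ 1 fun q => L q i j) (hf : ContDiff ℝ 3 (uncurry f))
    {c : ℝ} (hc : 0 < c) (hcoercive : ∀ q ξ, c * ∑ i, ξ i ^ 2 ≤ qform (L q) ξ) :
    ∃ (E' : ℝ → ℝ) (C : ℝ), ∀ t ∈ Icc 0 T,
      HasDerivAt (fun s => h1Energy γρ (ρ s - ρh s) + h1Energy γη (η s - ηh s)) (E' t) t ∧
        E' t ≤ C * (h1Energy γρ (ρ t - ρh t) + h1Energy γη (η t - ηh t)) := by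
  have hΨ : ContDiff ℝ 1 (reactionForce (d := d) f) :=
    contDiff_reactionForce (hf.of_le (by norm_num))
  obtain ⟨C, hC, hbound⟩ := exists_setIntegral_dotProduct_sub_le (μ := volume) isCompact_cell
    hL hΨ hc
    (fun q ξ => by simpa only [qform_eq_dotProduct, dotProduct, pow_two] using hcoercive q ξ)
    (h.smoothPer_rho.continuous_uncurry_mobArgs h.smoothPer_eta)
    (hh.smoothPer_rho.continuous_uncurry_mobArgs hh.smoothPer_eta)
    (h.smoothPer_muRho.continuous_uncurry_dvec_grad h.smoothPer_muEta)
    (hh.smoothPer_muRho.continuous_uncurry_dvec_grad hh.smoothPer_muEta) 0 T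
  refine ⟨_, C * ((2 / γρ + 2) + (2 / γη + 2)), fun t ht =>
    ⟨h.hasDerivAt_h1Energy_sub hh hL (hf.of_le (by norm_num)) ht, (hbound t ht).trans ?_⟩⟩
  have hρ := h.smoothPer_rho.sub hh.smoothPer_rho
  have hη := h.smoothPer_eta.sub hh.smoothPer_eta
  have hnorm := integral_norm_sq_mobArgs_le (hρ.contDiff 1 t) (hη.contDiff 1 t)
  simp only [mobArgs_sub (h.smoothPer_rho.differentiable t) (h.smoothPer_eta.differentiable t)
    (hh.smoothPer_rho.differentiable t) (hh.smoothPer_eta.differentiable t)] at hnorm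
  rw [mul_assoc]
  refine mul_le_mul_of_nonneg_left (hnorm.trans ?_) hC
  have hEρ : 0 ≤ h1Energy γρ (ρ t - ρh t) := h1Energy_nonneg hγρ.le
  have hEη : 0 ≤ h1Energy γη (η t - ηh t) := h1Energy_nonneg hγη.le
  have hcρ : 0 ≤ 2 / γρ + 2 := by positivity
  have hcη : 0 ≤ 2 / γη + 2 := by positivity
  calc h1sq (ρ t - ρh t) + h1sq (η t - ηh t)
      ≤ (2 / γρ + 2) * h1Energy γρ (ρ t - ρh t) + (2 / γη + 2) * h1Energy γη (η t - ηh t) :=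
        add_le_add (h1sq_le_mul_h1Energy hγρ) (h1sq_le_mul_h1Energy hγη)
    _ ≤ ((2 / γρ + 2) + (2 / γη + 2)) *
          (h1Energy γρ (ρ t - ρh t) + h1Energy γη (η t - ηh t)) :=
        by nlinarith [mul_nonneg hcρ hEη, mul_nonneg hcη hEρ]

theorem rho_eq_and_eta_eq (h : IsClassicalSolution T γρ γη f L ρ η μρ μη)
    (hh : IsClassicalSolution T γρ γη f L ρh ηh μρh μηh) (hγρ : 0 < γρ) (hγη : 0 < γη)
    (hL : ∀ i j, ContDiff ℝ 1 fun q => L q i j) (hf : ContDiff ℝ 3 (uncurry f))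
    {c : ℝ} (hc : 0 < c) (hcoercive : ∀ q ξ, c * ∑ i, ξ i ^ 2 ≤ qform (L q) ξ)
    (hρ₀ : ρ 0 = ρh 0) (hη₀ : η 0 = ηh 0) (ht : t ∈ Icc 0 T) : ρ t = ρh t ∧ η t = ηh t := by
  obtain ⟨E', C, hE⟩ := h.exists_deriv_le_mul_h1Energy_sub hh hγρ hγη hL hf hc hcoercive
  have hEρ (s : ℝ) : 0 ≤ h1Energy γρ (ρ s - ρh s) := h1Energy_nonneg hγρ.le
  have hEη (s : ℝ) : 0 ≤ h1Energy γη (η s - ηh s) := h1Energy_nonneg hγη.le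
  have hzero := eq_zero_of_deriv_le_mul_of_nonneg (fun s hs => (hE s hs).1)
    (fun s _ => add_nonneg (hEρ s) (hEη s)) (by simp [hρ₀, hη₀, h1Energy_zero])
    (fun s hs => (hE s hs).2) t ht
  obtain ⟨hEρt, hEηt⟩ := (add_eq_zero_iff_of_nonneg (hEρ t) (hEη t)).1 hzero
  have hρ := h.smoothPer_rho.sub hh.smoothPer_rho
  have hη := h.smoothPer_eta.sub hh.smoothPer_eta
  exact ⟨sub_eq_zero.1 ((hρ.2 t).eq_zero_of_h1Energy_eq_zero (hρ.contDiff 0 t).continuous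
      hγρ.le hEρt),
    sub_eq_zero.1 ((hη.2 t).eq_zero_of_h1Energy_eq_zero (hη.contDiff 0 t).continuous
      hγη.le hEηt)⟩

end IsClassicalSolution

end Solutions

end System

theorem stmt16_general (d : ℕ) (T : ℝ) (γρ γη : ℝ) (hγρ : 0 < γρ) (hγη : 0 < γη)
    (lam0 : ℝ) (hlam0 : 0 < lam0) (L : Args d → Matrix (Fin d ⊕ Unit) (Fin d ⊕ Unit) ℝ)
    (hL : ∀ i j, ContDiff ℝ 1 fun q : Args d => L q i j)
    (hLlb : ∀ q : Args d, ∀ ξ : (Fin d ⊕ Unit) → ℝ, lam0 * ∑ i, ξ i ^ 2 ≤ qform (L q) ξ)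
    (f : ℝ → ℝ → ℝ) (hf : ContDiff ℝ 3 fun p : ℝ × ℝ => f p.1 p.2)
    (ρ η μρ μη ρh ηh μρh μηh : ℝ → (Fin d → ℝ) → ℝ)
    (hsol : IsClassicalSolution T γρ γη f L ρ η μρ μη)
    (hsolh : IsClassicalSolution T γρ γη f L ρh ηh μρh μηh)
    (hinit1 : ∀ x, ρ 0 x = ρh 0 x) (hinit2 : ∀ x, η 0 x = ηh 0 x) :
    ∀ t ∈ Set.Icc (0:ℝ) T, ∀ x,
      ρ t x = ρh t x ∧ η t x = ηh t x ∧ μρ t x = μρh t x ∧ μη t x = μηh t x := by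
  intro t ht x
  obtain ⟨hρ, hη⟩ := hsol.rho_eq_and_eta_eq hsolh hγρ hγη hL hf hlam0 hLlb
    (funext hinit1) (funext hinit2) ht
  obtain ⟨-, hμρ, -, hμη⟩ := hsol.solves t ht x
  obtain ⟨-, hμρh, -, hμηh⟩ := hsolh.solves t ht x
  exact ⟨congrFun hρ x, congrFun hη x, by rw [hμρ, hμρh, hρ, hη], by rw [hμη, hμηh, hρ, hη]⟩

/-- Theorem 3.4, uniqueness / weak-strong uniqueness principle,
for classical solutions: under (A1)–(A4), two smooth periodic solutions of
the coupled Cahn–Hilliard/Allen–Cahn system with the same initial data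
coincide on `[0,T] × ℝ^d`, together with their chemical potentials. -/
theorem stmt16 (d : ℕ) (hd : 1 ≤ d) (T : ℝ) (hT : 0 ≤ T)
    -- (A1)
    (γρ γη : ℝ) (hγρ : 0 < γρ) (hγη : 0 < γη)
    -- (A2)
    (lam0 lam1 CL : ℝ) (hlam0 : 0 < lam0) (hlam01 : lam0 ≤ lam1) (hCL : 0 < CL)
    (L : Args d → Matrix (Fin d ⊕ Unit) (Fin d ⊕ Unit) ℝ)
    (hLsmooth : ∀ i j, ContDiff ℝ (⊤ : ℕ∞) fun q : Args d => L q i j)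
    (hLlb : ∀ q : Args d, ∀ ξ : (Fin d ⊕ Unit) → ℝ,
      lam0 * ∑ i, ξ i ^ 2 ≤ qform (L q) ξ)
    (hLub : ∀ q : Args d, ∀ ξ : (Fin d ⊕ Unit) → ℝ,
      qform (L q) ξ ≤ lam1 * ∑ i, ξ i ^ 2)
    (hLderiv : ∀ (q : Args d) i j, ‖fderiv ℝ (fun p => L p i j) q‖ ≤ CL)
    -- (A3)
    (f : ℝ → ℝ → ℝ) (hf : ContDiff ℝ (⊤ : ℕ∞) fun p : ℝ × ℝ => f p.1 p.2)
    (hf0 : ∀ r e, 0 ≤ f r e)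
    (hfpoly0 : ∃ Cp : ℝ, ∀ r e, |f r e| ≤ Cp * (1 + |r| + |e|) ^ 4)
    (hfpoly : ∀ k l : ℕ, k + l ≤ 3 → ∃ Cp : ℝ, ∀ r e,
      |pdiff k l f r e| ≤ Cp * (1 + |r| + |e|) ^ (4 - (k + l)))
    -- (A4)
    (α : ℝ) (hα : 0 < α)
    (hconv : ConvexOn ℝ Set.univ
      (fun p : ℝ × ℝ => f p.1 p.2 + α / 4 * (p.1 ^ 2 + p.2 ^ 2)))
    -- the two solutions
    (ρ η μρ μη ρh ηh μρh μηh : ℝ → (Fin d → ℝ) → ℝ)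
    (hρ : SmoothPer d ρ) (hη : SmoothPer d η)
    (hμρ : SmoothPer d μρ) (hμη : SmoothPer d μη)
    (hρh : SmoothPer d ρh) (hηh : SmoothPer d ηh)
    (hμρh : SmoothPer d μρh) (hμηh : SmoothPer d μηh)
    (hsol : Solves d T γρ γη f L ρ η μρ μη)
    (hsolh : Solves d T γρ γη f L ρh ηh μρh μηh)
    -- same initial data
    (hinit1 : ∀ x, ρ 0 x = ρh 0 x) (hinit2 : ∀ x, η 0 x = ηh 0 x) :
    ∀ t ∈ Set.Icc (0:ℝ) T, ∀ x,
      ρ t x = ρh t x ∧ η t x = ηh t x ∧ μρ t x = μρh t x ∧ μη t x = μηh t x :=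
  stmt16_general d T γρ γη hγρ hγη lam0 hlam0 L (fun i j => contDiff_infty.1 (hLsmooth i j) 1)
    hLlb f (contDiff_infty.1 hf 3) ρ η μρ μη ρh ηh μρh μηh ⟨hρ, hη, hμρ, hμη, hsol⟩
    ⟨hρh, hηh, hμρh, hμηh, hsolh⟩ hinit1 hinit2
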